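/- arXiv:2511.09177 — 2 statements merged into one kernel-verified Lean document; each statement's English description precedes it below -/
import Mathlib

section
/- Newton's problem of least resistance admits a solution in the class of concave functions: for every M > 0 there exists a concave function u : Ω → [0, M] on the open unit disc Ω ⊂ ℝ² such that J(u) ≤ J(v) for every concave function v : Ω → [0, M], where J(u) = ∫_Ω 1/(|∇u(x)|² + 1) dx. -/
open Set MeasureTheory

/-- The open unit disc in `ℝ²`. -/
noncomputable def Omega : Set (EuclideanSpace ℝ (Fin 2)) :=
  Metric.ball (0 : EuclideanSpace ℝ (Fin 2)) 1

/-- Newton's resistance functional `J(u) = ∫_Ω 1/(|∇u|² + 1) dx`. -/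
noncomputable def J (u : EuclideanSpace ℝ (Fin 2) → ℝ) : ℝ :=
  ∫ x in Omega, 1 / (‖gradient u x‖ ^ 2 + 1)

open Filter Topology

/-- A real function that is concave on an open set is differentiable at almost every point of it. -/
theorem ConcaveOn.ae_differentiableAt {E : Type*} [NormedAddCommGroup E] [NormedSpace ℝ E]
    [FiniteDimensional ℝ E] [MeasurableSpace E] [BorelSpace E] {μ : Measure E}
    [μ.IsAddHaarMeasure] {s : Set E} {f : E → ℝ} (hs : IsOpen s) (hf : ConcaveOn ℝ s f) :
    ∀ᵐ x ∂μ, x ∈ s → DifferentiableAt ℝ f x := by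
  rw [ae_iff]
  refine measure_null_of_locally_null _ fun x hx ↦ ?_
  simp only [mem_ofPred_eq, Classical.not_imp] at hx
  obtain ⟨K, t, ht, hK⟩ := hf.locallyLipschitzOn hs hx.1
  rw [hs.nhdsWithin_eq hx.1] at ht
  refine ⟨interior t ∩ {x | ¬(x ∈ s → DifferentiableAt ℝ f x)},
    inter_mem (mem_nhdsWithin_of_mem_nhds (interior_mem_nhds.2 ht)) self_mem_nhdsWithin,
    measure_mono_null ?_ (ae_iff.1 (hK.mono interior_subset).ae_differentiableWithinAt_of_mem)⟩
  rintro y ⟨hy, hys⟩ h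
  exact hys fun _ ↦ (h hy).differentiableAt (isOpen_interior.mem_nhds hy)

/-- The graph of a concave function lies below each of its tangent hyperplanes. -/
theorem ConcaveOn.le_add_of_hasFDerivAt {E : Type*} [NormedAddCommGroup E] [NormedSpace ℝ E]
    {s : Set E} {f : E → ℝ} {f' : E →L[ℝ] ℝ} {x v : E} (hf : ConcaveOn ℝ s f)
    (hx : x ∈ s) (hv : x + v ∈ s) (hd : HasFDerivAt f f' x) : f (x + v) ≤ f x + f' v := by
  have hline : HasDerivAt (fun t : ℝ ↦ f (x + t • v)) (f' v) 0 := hd.hasLineDerivAt v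
  have hslope := hline.tendsto_slope_zero_right
  have hle : f (x + v) - f x ≤ f' v := by
    refine ge_of_tendsto hslope ?_
    filter_upwards [Ioc_mem_nhdsGT (zero_lt_one' ℝ)] with t ht
    have h := hf.2 hx hv (sub_nonneg.2 ht.2) ht.1.le (by ring)
    have e : (1 - t) • x + t • (x + v) = x + t • v := by module
    rw [e] at h
    simp only [smul_eq_mul, zero_add, zero_smul, add_zero] at h ⊢
    rw [← div_eq_inv_mul, le_div_iff₀ ht.1]
    linarith
  linarith

/-- Derivatives of pointwise convergent concave functions converge wherever all the functions
are differentiable. -/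
theorem ConcaveOn.tendsto_hasFDerivAt_apply {E ι : Type*} [NormedAddCommGroup E]
    [NormedSpace ℝ E] {l : Filter ι} {s : Set E} {F : ι → E → ℝ} {f : E → ℝ}
    {F' : ι → E →L[ℝ] ℝ} {f' : E →L[ℝ] ℝ} {x : E} (hs : IsOpen s) (hx : x ∈ s)
    (hF : ∀ n, ConcaveOn ℝ s (F n)) (hlim : ∀ y ∈ s, Tendsto (fun n ↦ F n y) l (𝓝 (f y)))
    (hF' : ∀ n, HasFDerivAt (F n) (F' n) x) (hf' : HasFDerivAt f f' x) (v : E) :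
    Tendsto (fun n ↦ F' n v) l (𝓝 (f' v)) := by
  have lower : ∀ v : E, ∀ a < f' v, ∀ᶠ n in l, a < F' n v := by
    intro v a ha
    have hline : HasDerivAt (fun t : ℝ ↦ f (x + t • v)) (f' v) 0 := hf'.hasLineDerivAt v
    have hmem : ∀ᶠ t : ℝ in 𝓝[>] 0, x + t • v ∈ s := by
      have hc : ContinuousAt (fun t : ℝ ↦ x + t • v) 0 := by fun_prop
      exact nhdsWithin_le_nhds (hc (hs.mem_nhds (by simpa using hx)))
    obtain ⟨t, ⟨hat, hts⟩, ht⟩ :=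
      (((hline.tendsto_slope_zero_right.eventually (lt_mem_nhds ha)).and hmem).and
        self_mem_nhdsWithin).exists
    simp only [zero_add, zero_smul, add_zero] at hat
    filter_upwards [(((hlim _ hts).sub (hlim x hx)).const_smul t⁻¹).eventually
      (lt_mem_nhds hat)] with n hn
    refine hn.trans_le ?_
    have h := (hF n).le_add_of_hasFDerivAt hx hts (hF' n)
    rw [map_smul, smul_eq_mul] at h
    rw [smul_eq_mul, ← div_eq_inv_mul, div_le_iff₀ ht]
    linarith
  rw [tendsto_order]
  refine ⟨lower v, fun a ha ↦ ?_⟩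
  filter_upwards [lower (-v) (-a) (by simpa using ha)] with n hn
  simpa using hn

theorem EuclideanSpace.norm_gradient_sq {ι : Type*} [Fintype ι] [DecidableEq ι]
    (f : EuclideanSpace ℝ ι → ℝ) (x : EuclideanSpace ℝ ι) :
    ‖gradient f x‖ ^ 2 = ∑ i, (fderiv ℝ f x (EuclideanSpace.single i 1)) ^ 2 := by
  rw [EuclideanSpace.real_norm_sq_eq]
  refine Finset.sum_congr rfl fun i _ ↦ ?_
  rw [← inner_gradient_left, EuclideanSpace.inner_single_right]
  simp

theorem isOpen_Omega : IsOpen Omega := Metric.isOpen_ball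

theorem J_tendsto {F : ℕ → EuclideanSpace ℝ (Fin 2) → ℝ} {f : EuclideanSpace ℝ (Fin 2) → ℝ}
    (hF : ∀ n, ConcaveOn ℝ Omega (F n)) (hf : ConcaveOn ℝ Omega f)
    (hlim : ∀ x ∈ Omega, Tendsto (fun n ↦ F n x) atTop (𝓝 (f x))) :
    Tendsto (fun n ↦ J (F n)) atTop (𝓝 (J f)) := by
  have hfin : IsFiniteMeasure (volume.restrict Omega) :=
    ⟨by simp [Omega]⟩
  refine tendsto_integral_of_dominated_convergence (fun _ ↦ 1) (fun n ↦ ?_)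
    (integrable_const 1) (fun n ↦ ae_of_all _ fun x ↦ ?_) ?_
  · have h : Measurable (gradient (F n)) :=
      (InnerProductSpace.toDual ℝ _).symm.continuous.measurable.comp (measurable_fderiv ℝ (F n))
    exact (measurable_const.div ((h.norm.pow_const 2).add_const 1)).aestronglyMeasurable
  · rw [Real.norm_of_nonneg (by positivity)]
    exact div_le_one_of_le₀ (le_add_of_nonneg_left (sq_nonneg _)) (by positivity)
  · rw [ae_restrict_iff' isOpen_Omega.measurableSet]
    filter_upwards [ae_all_iff.2 fun n ↦ (hF n).ae_differentiableAt isOpen_Omega,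
      hf.ae_differentiableAt isOpen_Omega] with x hFx hfx hx
    simp only [EuclideanSpace.norm_gradient_sq]
    refine tendsto_const_nhds.div ((tendsto_finsetSum _ fun i _ ↦ ?_).add_const 1)
      (by positivity)
    exact (ConcaveOn.tendsto_hasFDerivAt_apply isOpen_Omega hx hF hlim
      (fun n ↦ (hFx n hx).hasFDerivAt) (hfx hx).hasFDerivAt _).pow 2

/-- Concave functions on an open set with values in a fixed bounded interval are equicontinuous. -/
theorem equicontinuous_of_concaveOn {E ι : Type*} [NormedAddCommGroup E] [NormedSpace ℝ E]
    {s : Set E} (hs : IsOpen s) {M : ℝ} {F : ι → E → ℝ} (hF : ∀ i, ConcaveOn ℝ s (F i))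
    (hM : ∀ i, ∀ x ∈ s, F i x ∈ Icc 0 M) : Equicontinuous fun i ↦ s.domRestrict (F i) := by
  refine (equicontinuous_restrict_iff F).2 ?_
  intro x hx
  obtain ⟨r, hr, hrs⟩ := Metric.isOpen_iff.1 hs x hx
  have hLip : ∀ i, LipschitzOnWith (2 * M / (r / 2)).toNNReal (F i) (Metric.ball x (r - r / 2)) :=
    fun i ↦ ((hF i).subset hrs (convex_ball x r)).lipschitzOnWith_of_abs_le (half_pos hr)
      fun a ha ↦ abs_le.2 ⟨by linarith [(hM i a (hrs ha)).1, (hM i a (hrs ha)).2],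
        (hM i a (hrs ha)).2⟩
  have hU := LipschitzOnWith.uniformEquicontinuousOn F _ hLip
  have hball : Metric.ball x (r - r / 2) ∈ 𝓝 x := Metric.ball_mem_nhds x (by linarith)
  intro U hU'
  have h := hU.equicontinuousOn x (mem_of_mem_nhds hball) U hU'
  rw [nhdsWithin_eq_nhds.2 hball] at h
  exact nhdsWithin_le_nhds h

/-- The class of concave functions `s → [0, M]` on an open set is sequentially compact under
pointwise convergence. -/
theorem exists_subseq_tendsto_of_concaveOn {E : Type*} [NormedAddCommGroup E] [NormedSpace ℝ E]
    [FiniteDimensional ℝ E] {s : Set E} (hs : IsOpen s) {M : ℝ} {F : ℕ → E → ℝ}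
    (hF : ∀ n, ConcaveOn ℝ s (F n)) (hM : ∀ n, ∀ x ∈ s, F n x ∈ Icc 0 M) :
    ∃ (f : E → ℝ) (φ : ℕ → ℕ), StrictMono φ ∧ ConcaveOn ℝ s f ∧ (∀ x ∈ s, f x ∈ Icc 0 M) ∧
      ∀ x ∈ s, Tendsto (fun n ↦ F (φ n) x) atTop (𝓝 (f x)) := by
  have hconv : Convex ℝ s := (hF 0).1
  set P : Set (s → ℝ) := {g | (∀ x, g x ∈ Icc 0 M) ∧
    ∀ (x y z : s) (a b : ℝ), 0 ≤ a → 0 ≤ b → a + b = 1 → (z : E) = a • (x : E) + b • (y : E) →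
      a * g x + b * g y ≤ g z} with hP
  have hPcompact : IsCompact P := by
    have hclosed : IsClosed {g : s → ℝ | ∀ (x y z : s) (a b : ℝ), 0 ≤ a → 0 ≤ b → a + b = 1 →
        (z : E) = a • (x : E) + b • (y : E) → a * g x + b * g y ≤ g z} := by
      simp only [ofPred_forall]
      refine isClosed_iInter fun x ↦ isClosed_iInter fun y ↦ isClosed_iInter fun z ↦
        isClosed_iInter fun a ↦ isClosed_iInter fun b ↦ isClosed_iInter fun _ ↦
        isClosed_iInter fun _ ↦ isClosed_iInter fun _ ↦ isClosed_iInter fun _ ↦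
        isClosed_le (by fun_prop) (by fun_prop)
    have h := (isCompact_univ_pi fun _ : s ↦ isCompact_Icc (a := (0 : ℝ)) (b := M)).inter_right
      hclosed
    convert h using 1
    ext g
    simp only [hP, mem_inter_iff, mem_univ_pi, mem_ofPred_eq]
  let ext (g : s → ℝ) : E → ℝ := Function.extend Subtype.val g 0
  have hext (g : s → ℝ) (x : s) : ext g x = g x := Subtype.val_injective.extend_apply _ _ _
  have hrestrict (g : s → ℝ) : s.domRestrict (ext g) = g := funext (hext g)
  have hext_Icc (g) (hg : g ∈ P) (x) (hx : x ∈ s) : ext g x ∈ Icc 0 M :=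
    (hext g ⟨x, hx⟩).symm ▸ hg.1 ⟨x, hx⟩
  have hext_concave (g) (hg : g ∈ P) : ConcaveOn ℝ s (ext g) := by
    refine ⟨hconv, fun x hx y hy a b ha hb hab ↦ ?_⟩
    have h := hg.2 ⟨x, hx⟩ ⟨y, hy⟩ ⟨_, hconv hx hy ha hb hab⟩ a b ha hb hab rfl
    simpa only [← hext, smul_eq_mul] using h
  have hcont (g) (hg : g ∈ P) : Continuous g := by
    rw [← hrestrict g]
    exact continuousOn_iff_continuous_domRestrict.1 ((hext_concave g hg).continuousOn hs)
  have hFP (n : ℕ) : s.domRestrict (F n) ∈ P := by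
    refine ⟨fun x ↦ hM n x x.2, fun x y z a b ha hb hab hz ↦ ?_⟩
    have h := (hF n).2 x.2 y.2 ha hb hab
    rwa [← hz] at h
  let K : Set C(s, ℝ) := {g | ⇑g ∈ P}
  have himage : ContinuousMap.toFun '' K = P := by
    ext g
    exact ⟨by rintro ⟨k, hk, rfl⟩; exact hk, fun hg ↦ ⟨⟨g, hcont g hg⟩, hg, rfl⟩⟩
  have hequi : Equicontinuous ((↑) : K → s → ℝ) := by
    have h := equicontinuous_of_concaveOn hs
      (fun k : K ↦ hext_concave _ k.2) (fun k : K ↦ hext_Icc _ k.2)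
    simpa only [hrestrict] using h
  have hK : IsCompact K := ArzelaAscoli.isCompact_of_equicontinuous K (himage ▸ hPcompact) hequi
  have := hs.locallyCompactSpace
  obtain ⟨g, hg, φ, hφ, hlim⟩ := hK.tendsto_subseq
    (x := fun n ↦ (⟨s.domRestrict (F n), hcont _ (hFP n)⟩ : C(s, ℝ))) hFP
  refine ⟨ext g, φ, hφ, hext_concave _ hg, hext_Icc _ hg, fun x hx ↦ ?_⟩
  have h := ((continuous_eval_const (F := C(s, ℝ)) (⟨x, hx⟩ : s)).tendsto g).comp hlim
  rw [← hext g] at h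
  exact h

/-- Newton's problem of least resistance admits a solution in the class of
concave functions `u : Ω → [0, M]`. -/
theorem newton_problem_has_minimizer (M : ℝ) (hM : 0 < M) :
    ∃ u : EuclideanSpace ℝ (Fin 2) → ℝ,
      ConcaveOn ℝ Omega u ∧ (∀ x ∈ Omega, u x ∈ Icc 0 M) ∧
      ∀ v : EuclideanSpace ℝ (Fin 2) → ℝ,
        ConcaveOn ℝ Omega v → (∀ x ∈ Omega, v x ∈ Icc 0 M) →
        J u ≤ J v := by
  let A : Set (EuclideanSpace ℝ (Fin 2) → ℝ) :=
    {u | ConcaveOn ℝ Omega u ∧ ∀ x ∈ Omega, u x ∈ Icc 0 M}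
  have hA : (J '' A).Nonempty :=
    ⟨_, 0, ⟨concaveOn_const 0 (convex_ball _ _), fun _ _ ↦ ⟨le_rfl, hM.le⟩⟩, rfl⟩
  have hbdd : BddBelow (J '' A) := by
    refine ⟨0, ?_⟩
    rintro _ ⟨u, -, rfl⟩
    exact integral_nonneg fun x ↦ by positivity
  obtain ⟨j, -, hj, hjA⟩ := exists_seq_tendsto_sInf hA hbdd
  choose F hFA hFj using hjA
  obtain ⟨u, φ, hφ, hu, huM, hlim⟩ := exists_subseq_tendsto_of_concaveOn isOpen_Omega
    (fun n ↦ (hFA n).1) (fun n ↦ (hFA n).2)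
  refine ⟨u, hu, huM, fun v hv hvM ↦ ?_⟩
  have hJ : Tendsto (fun n ↦ J (F (φ n))) atTop (𝓝 (sInf (J '' A))) := by
    simpa only [hFj] using! hj.comp hφ.tendsto_atTop
  rw [tendsto_nhds_unique (J_tendsto (fun n ↦ (hFA (φ n)).1) hu hlim) hJ]
  exact csInf_le hbdd ⟨v, ⟨hv, hvM⟩, rfl⟩
end

section
/- A minimizer of Newton's problem vanishes at the boundary: if u : Ω → [0, M] is concave and minimizes J over all concave functions v : Ω → [0, M], then for every boundary point x₀ with |x₀| = 1, u(x) tends to 0 as x tends to x₀ within Ω. -/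
open Set MeasureTheory

lemma norm_gradient_eq_norm_fderiv {F : Type*} [NormedAddCommGroup F] [InnerProductSpace ℝ F]
    [CompleteSpace F] (f : F → ℝ) (x : F) : ‖gradient f x‖ = ‖fderiv ℝ f x‖ := by
  rw [← toDual_gradient, LinearIsometryEquiv.norm_map]

/-- A concave function oscillating by at most `D` on a ball of radius `r` has gradient of norm at
most `4 * D / r` at the centre. -/
lemma ConcaveOn.norm_gradient_le {F : Type*} [NormedAddCommGroup F] [InnerProductSpace ℝ F]
    [CompleteSpace F] {f : F → ℝ} {z : F} {r a D : ℝ} (hr : 0 < r) (hD : 0 ≤ D)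
    (hf : ConcaveOn ℝ (Metric.ball z r) f)
    (hfa : ∀ x ∈ Metric.ball z r, f x ∈ Icc a (a + D)) :
    ‖gradient f z‖ ≤ 4 * D / r := by
  have hg : ConcaveOn ℝ (Metric.ball z r) (fun x => f x + -a) := hf.add_const (-a)
  have hlip := hg.lipschitzOnWith_of_abs_le (half_pos hr) (M := D) fun x hx => by
    have := hfa x hx
    rw [abs_le]
    constructor <;> linarith [this.1, this.2]
  have hmem : Metric.ball z (r - r / 2) ∈ nhds z := Metric.ball_mem_nhds z (by linarith)
  have h := norm_fderiv_le_of_lipschitzOn ℝ hmem hlip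
  rw [fderiv_add_const] at h
  rw [norm_gradient_eq_norm_fderiv]
  refine h.trans_eq ?_
  rw [Real.coe_toNNReal _ (by positivity)]
  field_simp
  ring

lemma measurable_norm_gradient (f : EuclideanSpace ℝ (Fin 2) → ℝ) :
    Measurable fun x => ‖gradient f x‖ := by
  simp_rw [norm_gradient_eq_norm_fderiv]
  exact (measurable_fderiv ℝ f).norm

/-- The affine map `y ↦ a y + b ⟨n, y⟩ n + w`, with `n` a unit vector, scales areas by
`a (a + b)`. -/
lemma volume_real_image_stretch {n : EuclideanSpace ℝ (Fin 2)} (hn : ‖n‖ = 1) {a b : ℝ}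
    (ha : 0 ≤ a) (hb : 0 ≤ b) (w : EuclideanSpace ℝ (Fin 2)) (s : Set (EuclideanSpace ℝ (Fin 2))) :
    volume.real ((fun y => a • y + (b * inner ℝ n y) • n + w) '' s) =
      a * (a + b) * volume.real s := by
  let L : EuclideanSpace ℝ (Fin 2) →ₗ[ℝ] EuclideanSpace ℝ (Fin 2) :=
    a • LinearMap.id + b • ((innerₛₗ ℝ n).smulRight n)
  have hL : (fun y => a • y + (b * inner ℝ n y) • n + w) '' s = (· + w) '' (L '' s) := by
    rw [image_image]
    refine image_congr fun y _ => ?_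
    simp [L, smul_smul]
  have hn' : n 0 ^ 2 + n 1 ^ 2 = 1 := by
    have := EuclideanSpace.norm_sq_eq n
    rw [hn, Fin.sum_univ_two] at this
    simpa using this.symm
  have hdet : LinearMap.det L = a * (a + b) := by
    rw [← LinearMap.det_toMatrix (EuclideanSpace.basisFun (Fin 2) ℝ).toBasis, Matrix.det_fin_two]
    simp [L, LinearMap.toMatrix_apply, EuclideanSpace.inner_single_right]
    linear_combination a * b * hn'
  rw [hL, image_add_right, measureReal_def, measure_preimage_add_right,
    Measure.addHaar_image_linearMap, hdet, abs_of_nonneg (by positivity), ENNReal.toReal_mul,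
    ENNReal.toReal_ofReal (by positivity), measureReal_def]

lemma integrable_resistance (u : EuclideanSpace ℝ (Fin 2) → ℝ) :
    IntegrableOn (fun x => 1 / (‖gradient u x‖ ^ 2 + 1)) Omega := by
  have : IsFiniteMeasure (volume.restrict Omega) :=
    ⟨by simp [Omega]⟩
  refine Integrable.of_bound (C := 1) ?_ (Filter.Eventually.of_forall fun x => ?_)
  · exact (measurable_const.div
      (((measurable_norm_gradient u).pow_const 2).add_const 1)).aestronglyMeasurable
  · rw [Real.norm_of_nonneg (by positivity), div_le_one (by positivity)]
    linarith [sq_nonneg ‖gradient u x‖]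

/-- Lower bound for the change of resistance when `u` is replaced, on an open convex set `V`, by a
function with gradient of constant norm `k`. -/
lemma resistance_sub_le {u v : EuclideanSpace ℝ (Fin 2) → ℝ}
    {V N : Set (EuclideanSpace ℝ (Fin 2))} {k G : ℝ}
    (hV : IsOpen V) (hVc : Convex ℝ V) (hVΩ : V ⊆ Omega) (hNV : N ⊆ V)
    (hv : ∀ x ∈ V, ‖gradient v x‖ = k)
    (huv : ∀ x ∈ Omega, x ∉ closure V → gradient v x = gradient u x)
    (hu : ∀ x ∈ N, ‖gradient u x‖ ≤ G) :
    volume.real N * (1 / (G ^ 2 + 1)) - volume.real V * (1 / (k ^ 2 + 1)) ≤ J u - J v := by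
  have hfin : IsFiniteMeasure (volume.restrict Omega) :=
    ⟨by simp [Omega]⟩
  have hΩ : volume Omega ≠ ⊤ := by simp [Omega]
  set N' : Set (EuclideanSpace ℝ (Fin 2)) := V ∩ {x | ‖gradient u x‖ ≤ G} with hN'
  have hN'm : MeasurableSet N' :=
    hV.measurableSet.inter (measurableSet_le (measurable_norm_gradient u) measurable_const)
  have hNN' : volume.real N ≤ volume.real N' :=
    measureReal_mono (fun x hx => ⟨hNV hx, hu x hx⟩)
      (measure_ne_top_of_subset (inter_subset_left.trans hVΩ) hΩ)
  have key : ∀ᵐ x ∂(volume.restrict Omega),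
      N'.indicator (fun _ => 1 / (G ^ 2 + 1)) x - V.indicator (fun _ => 1 / (k ^ 2 + 1)) x ≤
        1 / (‖gradient u x‖ ^ 2 + 1) - 1 / (‖gradient v x‖ ^ 2 + 1) := by
    have hfr : ∀ᵐ x ∂(volume.restrict Omega), x ∉ frontier V :=
      ae_restrict_of_ae (measure_eq_zero_iff_ae_notMem.1 (hVc.addHaar_frontier volume))
    filter_upwards [hfr, ae_restrict_mem (by unfold Omega; exact measurableSet_ball)] with x hx hxΩ
    by_cases hxV : x ∈ V
    · rw [indicator_of_mem hxV, hv x hxV]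
      gcongr
      by_cases hxN : x ∈ N'
      · rw [indicator_of_mem hxN]
        have := hxN.2
        simp only [mem_ofPred_eq] at this
        gcongr
      · rw [indicator_of_notMem hxN]
        positivity
    · have hxc : x ∉ closure V := fun h => hx ⟨h, by rwa [hV.interior_eq]⟩
      rw [indicator_of_notMem hxV, indicator_of_notMem (fun h => hxV h.1), huv x hxΩ hxc]
      simp
  have hi1 : Integrable (N'.indicator (fun _ => 1 / (G ^ 2 + 1))) (volume.restrict Omega) :=
    (integrable_const _).indicator hN'm
  have hi2 : Integrable (V.indicator (fun _ => 1 / (k ^ 2 + 1))) (volume.restrict Omega) :=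
    (integrable_const _).indicator hV.measurableSet
  have h := integral_mono_ae (hi1.sub hi2)
    ((integrable_resistance u).sub (integrable_resistance v)) key
  simp only [Pi.sub_apply] at h
  rw [integral_sub hi1 hi2, integral_sub (integrable_resistance u) (integrable_resistance v),
    integral_indicator_const _ hN'm, integral_indicator_const _ hV.measurableSet,
    measureReal_restrict_apply hN'm, measureReal_restrict_apply hV.measurableSet,
    inter_eq_left.2 hVΩ, inter_eq_left.2 (inter_subset_left.trans hVΩ)] at h
  simp only [smul_eq_mul] at h
  refine le_trans ?_ h
  gcongr

/-- The upper limit `c` of a concave function at a boundary point where it does not tend to `0`. -/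
lemma exists_upper_limit {M : ℝ} {u : EuclideanSpace ℝ (Fin 2) → ℝ}
    (hu : ConcaveOn ℝ Omega u) (huM : ∀ x ∈ Omega, u x ∈ Icc 0 M)
    {x₀ : EuclideanSpace ℝ (Fin 2)} (hx₀ : ‖x₀‖ = 1)
    (hnot : ¬ Filter.Tendsto u (nhdsWithin x₀ Omega) (nhds 0)) :
    ∃ c, 0 < c ∧ c ≤ M ∧
      (∀ ε > 0, ∃ δ > 0, ∀ x ∈ Omega, dist x x₀ < δ → u x < c + ε) ∧
      ∀ y ∈ Omega, ∀ μ : ℝ, 0 < μ → μ ≤ 1 → (1 - μ) * c ≤ u ((1 - μ) • x₀ + μ • y) := by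
  have hne : (nhdsWithin x₀ Omega).NeBot := by
    rw [← mem_closure_iff_nhdsWithin_neBot, Omega, closure_ball _ one_ne_zero]
    simp [hx₀]
  have hmem : ∀ᶠ x in nhdsWithin x₀ Omega, x ∈ Omega := self_mem_nhdsWithin
  have hbdd : (nhdsWithin x₀ Omega).IsBoundedUnder (· ≤ ·) u :=
    ⟨M, Filter.eventually_map.2 (hmem.mono fun x hx => (huM x hx).2)⟩
  have hbdd' : (nhdsWithin x₀ Omega).IsBoundedUnder (· ≥ ·) u :=
    ⟨0, Filter.eventually_map.2 (hmem.mono fun x hx => (huM x hx).1)⟩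
  have hcob : (nhdsWithin x₀ Omega).IsCoboundedUnder (· ≤ ·) u := hbdd'.isCoboundedUnder_le
  set c := Filter.limsup u (nhdsWithin x₀ Omega) with hc
  have hA : ∀ ε > 0, ∀ᶠ x in nhdsWithin x₀ Omega, u x < c + ε := fun ε hε =>
    Filter.eventually_lt_of_limsup_lt (by linarith) hbdd
  have hB : ∀ ε > 0, ∃ᶠ x in nhdsWithin x₀ Omega, c - ε < u x := fun ε hε =>
    Filter.frequently_lt_of_lt_limsup hcob (by linarith)
  refine ⟨c, ?_, ?_, ?_, ?_⟩
  · by_contra! hc0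
    refine hnot (Metric.tendsto_nhds.2 fun ε hε => ?_)
    filter_upwards [hA ε hε, hmem] with x hx hxΩ
    rw [Real.dist_eq, sub_zero, abs_of_nonneg (huM x hxΩ).1]
    linarith
  · exact Filter.limsup_le_of_le hcob (hmem.mono fun x hx => (huM x hx).2)
  · intro ε hε
    obtain ⟨δ, hδ, h⟩ := Metric.mem_nhdsWithin_iff.1 (hA ε hε)
    exact ⟨δ, hδ, fun x hx hd => h ⟨hd, hx⟩⟩
  · intro y hy μ hμ hμ1
    have hopen : IsOpen Omega := Metric.isOpen_ball
    have hyn : ‖y‖ < 1 := by simpa [Omega] using hy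
    have hp : (1 - μ) • x₀ + μ • y ∈ Omega := by
      rw [Omega, mem_ball_zero_iff]
      calc ‖(1 - μ) • x₀ + μ • y‖ ≤ ‖(1 - μ) • x₀‖ + ‖μ • y‖ := norm_add_le _ _
        _ = (1 - μ) + μ * ‖y‖ := by
          rw [norm_smul, norm_smul, hx₀, Real.norm_of_nonneg (by linarith),
            Real.norm_of_nonneg hμ.le, mul_one]
        _ < 1 := by nlinarith
    have hcont : ContinuousAt u ((1 - μ) • x₀ + μ • y) :=
      (hu.continuousOn hopen).continuousAt (hopen.mem_nhds hp)
    have hlim : Filter.Tendsto (fun z => u ((1 - μ) • z + μ • y)) (nhdsWithin x₀ Omega)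
        (nhds (u ((1 - μ) • x₀ + μ • y))) := by
      have h1 : Filter.Tendsto (fun z : EuclideanSpace ℝ (Fin 2) => (1 - μ) • z + μ • y)
          (nhds x₀) (nhds ((1 - μ) • x₀ + μ • y)) :=
        Continuous.tendsto (by fun_prop) x₀
      exact Filter.Tendsto.comp hcont (h1.mono_left nhdsWithin_le_nhds)
    refine le_of_forall_pos_sub_le fun ε hε => ?_
    refine ge_of_tendsto_of_frequently hlim (((hB ε hε).and_eventually hmem).mono ?_)
    rintro z ⟨hz, hzΩ⟩
    have h := hu.2 hzΩ hy (sub_nonneg.2 hμ1) hμ.le (by ring)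
    simp only [smul_eq_mul] at h
    nlinarith [(huM y hy).1]

/-- A minimizer of Newton's problem vanishes at the boundary: for every
boundary point `x₀` with `|x₀| = 1`, `u(x) → 0` as `x → x₀` within `Ω`. -/
theorem minimizer_vanishes_at_boundary (M : ℝ) (hM : 0 < M)
    (u : EuclideanSpace ℝ (Fin 2) → ℝ)
    (hu : ConcaveOn ℝ Omega u) (huM : ∀ x ∈ Omega, u x ∈ Icc 0 M)
    (hmin : ∀ v : EuclideanSpace ℝ (Fin 2) → ℝ,
      ConcaveOn ℝ Omega v → (∀ x ∈ Omega, v x ∈ Icc 0 M) → J u ≤ J v) :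
    ∀ x₀ : EuclideanSpace ℝ (Fin 2), ‖x₀‖ = 1 →
      Filter.Tendsto u (nhdsWithin x₀ Omega) (nhds 0) := by
  intro x₀ hx₀
  by_contra hnot
  obtain ⟨c, hc, hcM, hup, hlow⟩ := exists_upper_limit hu huM hx₀ hnot
  have hopen : IsOpen Omega := Metric.isOpen_ball
  obtain ⟨l, hl⟩ : ∃ l, l = c / (32 * M) / 131072 := ⟨_, rfl⟩
  obtain ⟨σ, hσ⟩ : ∃ σ, σ = c / (32 * M) := ⟨_, rfl⟩
  have hσl : σ = 131072 * l := by rw [hσ, hl]; ring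
  have hσ0 : 0 < σ := by rw [hσ]; positivity
  have hσ1 : σ ≤ 1 := by
    rw [hσ, div_le_one (by positivity)]
    linarith
  have hl0 : 0 < l := by linarith
  have hl1 : l ≤ 1 / 2 := by linarith
  have hlc : 0 < l * c := by positivity
  obtain ⟨δ, hδ, hup⟩ := hup (l * c / 2) (by positivity)
  obtain ⟨μ, hμ0, hμ⟩ : ∃ μ > 0, μ < min (l / 2) (min (64 * l * c) (δ ^ 2 * c / (8 * M))) :=
    exists_between (by positivity)
  rw [lt_min_iff, lt_min_iff, lt_div_iff₀ (by positivity : 0 < 8 * M)] at hμ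
  obtain ⟨hμl, hμc, hμδ⟩ := hμ
  obtain ⟨k, hk⟩ : ∃ k, k = c / (4 * μ) := ⟨_, rfl⟩
  have hk0 : 0 < k := by rw [hk]; positivity
  have hkμ : k * μ = c / 4 := by rw [hk]; field_simp
  have hinner : ∀ x ∈ Omega, 0 < 1 - inner ℝ x₀ x := fun x hx => by
    have h1 := real_inner_le_norm x₀ x
    have h2 : ‖x‖ < 1 := by simpa [Omega] using hx
    rw [hx₀, one_mul] at h1
    linarith
  let ℓ : EuclideanSpace ℝ (Fin 2) → ℝ := fun x => k * (1 - inner ℝ x₀ x)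
  have hℓder : ∀ x, HasFDerivAt ℓ (k • -(innerSL ℝ x₀)) x := fun x =>
    ((innerSL ℝ x₀).hasFDerivAt.const_sub 1).const_mul k
  have hℓcont : Continuous ℓ := by fun_prop
  have hℓ : ∀ x y : EuclideanSpace ℝ (Fin 2), ∀ a b : ℝ, a + b = 1 →
      ℓ (a • x + b • y) = a * ℓ x + b * ℓ y := fun x y a b hab => by
    simp only [ℓ, inner_add_right, real_inner_smul_right]
    linear_combination -k * hab
  have hℓconc : ConcaveOn ℝ Omega ℓ :=
    ⟨hu.1, fun x _ y _ a b _ _ hab => (hℓ x y a b hab).ge⟩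
  have hℓconv : ConvexOn ℝ Omega ℓ :=
    ⟨hu.1, fun x _ y _ a b _ _ hab => (hℓ x y a b hab).le⟩
  let V : Set (EuclideanSpace ℝ (Fin 2)) := Omega ∩ (u - ℓ) ⁻¹' Ioi 0
  have hVmem : ∀ x, x ∈ V ↔ x ∈ Omega ∧ ℓ x < u x := fun x => by simp [V]
  have hVopen : IsOpen V :=
    ((hu.continuousOn hopen).sub hℓcont.continuousOn).isOpen_inter_preimage hopen isOpen_Ioi
  have hVconv : Convex ℝ V := (hu.sub hℓconv).convex_gt 0
  -- points near `x₀` in a cone lie in `V`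
  have hcone : ∀ q, ‖q‖ < 1 / 2 → (1 - μ) • x₀ + μ • q ∈ V ∧
      (1 - μ) * c ≤ u ((1 - μ) • x₀ + μ • q) := by
    intro q hq
    have hqΩ : q ∈ Omega := by
      rw [Omega, mem_ball_zero_iff]; linarith
    have h := hlow q hqΩ μ hμ0 (by linarith)
    refine ⟨(hVmem _).2 ⟨?_, lt_of_lt_of_le ?_ h⟩, h⟩
    · rw [Omega, mem_ball_zero_iff]
      calc ‖(1 - μ) • x₀ + μ • q‖ ≤ ‖(1 - μ) • x₀‖ + ‖μ • q‖ := norm_add_le _ _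
        _ = (1 - μ) + μ * ‖q‖ := by
          rw [norm_smul, norm_smul, hx₀, Real.norm_of_nonneg (by linarith),
            Real.norm_of_nonneg hμ0.le, mul_one]
        _ < 1 := by nlinarith
    · have h1 : ℓ ((1 - μ) • x₀ + μ • q) = c / 4 * (1 - inner ℝ x₀ q) := by
        simp only [ℓ, inner_add_right, real_inner_smul_right, real_inner_self_eq_norm_sq, hx₀]
        rw [← hkμ]; ring
      have h2 := neg_le_of_abs_le (abs_real_inner_le_norm x₀ q)
      rw [hx₀, one_mul] at h2
      rw [h1]
      nlinarith
  -- `V` shrinks to `x₀` as `μ → 0`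
  have hVheight : ∀ y ∈ V, 0 < 1 - inner ℝ x₀ y ∧ c * (1 - inner ℝ x₀ y) < 4 * M * μ := by
    intro y hy
    obtain ⟨hyΩ, hy⟩ := (hVmem y).1 hy
    have h1 : k * (1 - inner ℝ x₀ y) < M := hy.trans_le (huM y hyΩ).2
    refine ⟨hinner y hyΩ, ?_⟩
    have h2 : c = 4 * (k * μ) := by linarith
    calc c * (1 - inner ℝ x₀ y) = 4 * μ * (k * (1 - inner ℝ x₀ y)) := by rw [h2]; ring
      _ < 4 * μ * M := by gcongr
      _ = 4 * M * μ := by ring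
  have hVup : ∀ y ∈ V, u y < c + l * c / 2 := by
    intro y hy
    have hyΩ := ((hVmem y).1 hy).1
    refine hup y hyΩ (lt_of_pow_lt_pow_left₀ 2 hδ.le ?_)
    have hyn : ‖y‖ < 1 := by simpa [Omega] using hyΩ
    rw [dist_eq_norm, norm_sub_sq_real, hx₀, real_inner_comm]
    have h1 := (hVheight y hy).2
    have h2 : ‖y‖ ^ 2 < 1 := by nlinarith [norm_nonneg y]
    have h3 : c * (2 * (1 - inner ℝ x₀ y)) < c * δ ^ 2 := by linarith
    have h4 := lt_of_mul_lt_mul_left h3 hc.le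
    linarith
  let w : EuclideanSpace ℝ (Fin 2) := ((1 - l) * (1 - μ) - σ) • x₀
  let T : EuclideanSpace ℝ (Fin 2) → EuclideanSpace ℝ (Fin 2) :=
    fun y => l • y + (σ * inner ℝ x₀ y) • x₀ + w
  have hT : ∀ y ∈ V, ∀ z ∈ Metric.ball (T y) (μ / 8),
      z ∈ V ∧ (1 - l) * (1 - μ) * c ≤ u z := by
    intro y hy z hz
    have hlμ : 0 < (1 - l) * μ := mul_pos (by linarith) hμ0
    let q := ((1 - l) * μ)⁻¹ • (z - l • y - ((1 - l) * (1 - μ)) • x₀)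
    have hq : ‖q‖ < 1 / 2 := by
      have h1 : z - l • y - ((1 - l) * (1 - μ)) • x₀ =
          (z - T y) - (σ * (1 - inner ℝ x₀ y)) • x₀ := by
        simp only [T, w]
        module
      have h2 : ‖z - T y‖ < μ / 8 := by simpa [dist_eq_norm] using hz
      obtain ⟨h3, h4⟩ := hVheight y hy
      have h5 : ‖(σ * (1 - inner ℝ x₀ y)) • x₀‖ ≤ μ / 8 := by
        rw [norm_smul, hx₀, mul_one, Real.norm_of_nonneg (by positivity), hσ,
          div_mul_eq_mul_div, div_le_iff₀ (by positivity)]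
        linarith
      have h6 := norm_sub_le (z - T y) ((σ * (1 - inner ℝ x₀ y)) • x₀)
      simp only [q]
      rw [norm_smul, h1, Real.norm_of_nonneg (by positivity), inv_mul_lt_iff₀ hlμ]
      nlinarith
    obtain ⟨hpV, hp⟩ := hcone q hq
    have hz' : z = (1 - l) • ((1 - μ) • x₀ + μ • q) + l • y := by
      have : (1 - l) • μ • q = z - l • y - ((1 - l) * (1 - μ)) • x₀ := by
        rw [smul_smul, smul_inv_smul₀ hlμ.ne']
      rw [smul_add, this]
      module
    have hyΩ := ((hVmem y).1 hy).1
    have h := hu.2 ((hVmem _).1 hpV).1 hyΩ (by linarith : 0 ≤ 1 - l) hl0.le (by ring)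
    simp only [smul_eq_mul] at h
    rw [← hz'] at h
    refine ⟨?_, ?_⟩
    · rw [hz']
      exact hVconv hpV hy (by linarith) hl0.le (by ring)
    · have h1 : 0 ≤ l * u y := mul_nonneg hl0.le (huM y hyΩ).1
      have h2 : (1 - l) * ((1 - μ) * c) ≤ (1 - l) * u ((1 - μ) • x₀ + μ • q) :=
        mul_le_mul_of_nonneg_left hp (by linarith)
      linarith
  have hNV : T '' V ⊆ V := by
    rintro _ ⟨y, hy, rfl⟩
    exact (hT y hy _ (Metric.mem_ball_self (by positivity))).1
  have hgrad : ∀ x ∈ T '' V, ‖gradient u x‖ ≤ 4 * (2 * l * c) / (μ / 8) := by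
    rintro _ ⟨y, hy, rfl⟩
    refine ConcaveOn.norm_gradient_le (a := c - 3 / 2 * (l * c)) (by positivity) (by positivity)
      (hu.subset (fun z hz => ((hVmem z).1 (hT y hy z hz).1).1) (convex_ball _ _)) ?_
    intro z hz
    obtain ⟨hzV, hz⟩ := hT y hy z hz
    have := hVup z hzV
    constructor
    · nlinarith [mul_pos hl0 hμ0]
    · linarith
  let v : EuclideanSpace ℝ (Fin 2) → ℝ := u ⊓ ℓ
  have hvconc : ConcaveOn ℝ Omega v := hu.inf hℓconc
  have hvM : ∀ x ∈ Omega, v x ∈ Icc 0 M := fun x hx =>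
    ⟨le_inf (huM x hx).1 (mul_nonneg hk0.le (hinner x hx).le), inf_le_left.trans (huM x hx).2⟩
  have hvV : ∀ x ∈ V, ‖gradient v x‖ = k := by
    intro x hx
    have hev : v =ᶠ[nhds x] ℓ := by
      filter_upwards [hVopen.mem_nhds hx] with z hz
      exact inf_eq_right.2 ((hVmem z).1 hz).2.le
    rw [hev.gradient_eq, norm_gradient_eq_norm_fderiv, (hℓder x).fderiv, norm_smul, norm_neg,
      innerSL_apply_norm, hx₀, mul_one, Real.norm_of_nonneg hk0.le]
  have hvu : ∀ x ∈ Omega, x ∉ closure V → gradient v x = gradient u x := by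
    intro x hx hxV
    refine Filter.EventuallyEq.gradient_eq ?_
    filter_upwards [hopen.mem_nhds hx, isClosed_closure.isOpen_compl.mem_nhds hxV] with z hz hzV
    refine inf_eq_left.2 (not_lt.1 fun h => hzV (subset_closure ((hVmem z).2 ⟨hz, h⟩)))
  have hVpos : 0 < volume.real V := by
    refine ENNReal.toReal_pos ?_ ?_
    · exact (hVopen.measure_pos volume ⟨_, (hcone 0 (by simp)).1⟩).ne'
    · exact measure_ne_top_of_subset inter_subset_left (by simp [Omega])
  have hJ := resistance_sub_le hVopen hVconv inter_subset_left hNV hvV hvu hgrad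
  have hJ' := hmin v hvconc hvM
  rw [volume_real_image_stretch hx₀ hl0.le hσ0.le] at hJ
  have hG : 4 * (2 * l * c) / (μ / 8) = 256 * (l * k) := by rw [hk]; field_simp; ring
  have hlk : 1 ≤ 256 * (l * k) := by
    rw [← hG, le_div_iff₀ (by positivity)]
    linarith
  rw [hG] at hJ
  have hfin : 1 / (k ^ 2 + 1) < l * (l + σ) * (1 / ((256 * (l * k)) ^ 2 + 1)) := by
    rw [mul_one_div, div_lt_div_iff₀ (by positivity) (by positivity), one_mul, hσl]
    nlinarith [mul_pos hl0 hl0, mul_pos hk0 hk0]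
  have := mul_lt_mul_of_pos_left hfin hVpos
  linarith
end
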